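/- arXiv:math-ph/0408060 — 5 statements merged into one kernel-verified Lean document; each statement's English description precedes it below -/
import Mathlib

section
/- There exists a constant C = C(γ) > 0, depending only on γ, with the following property: for every γ > 0, every D > 0, every S > 0, every k ∈ ℤ²_* with |k| ≥ 2, and every ω : ℤ²_* → ℂ satisfying |ω|_{∞,γ} ≤ D and ‖ω‖ ≤ S, the Navier–Stokes nonlinearity satisfies |F_k(ω)| ≤ C · S · D · |k| · √(log|k|) / |k|^γ. -/
/-!
Put `R = |k|`. Since `|ℓ^⊥ · k| ≤ |ℓ| |k|`, the `ℓ`-th term is at most `R |ω_ℓ| |ω_{k-ℓ}| / |ℓ|`.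
If `|ℓ| ≤ R/2`, then `|k - ℓ| ≥ R/2`, and the weighted sup norm controls `ω_{k-ℓ}`; if `|ℓ| > R/2`,
it controls `ω_ℓ`. This is `norm_Fterm_le`:
`|term| ≤ R D ((R/2)^{-γ} g₁(ℓ) |ω_ℓ| + g₂(ℓ) |ω_{k-ℓ}|)`, where `g₁(ℓ) = 1/|ℓ|` on `0 < |ℓ| ≤ R/2`
and `g₂(ℓ) = |ℓ|^{-1-γ}` on `|ℓ| > R/2`.

By Cauchy–Schwarz it remains to bound `∑ g₁²` by a multiple of `log R` (`sum_gnear_sq_le`) and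
`∑ g₂²` by a multiple of `R^{-2γ}` (`sum_gfar_sq_le`). Both follow by summing over the squares
`max(|ℓ₁|, |ℓ₂|) = m`, which hold `8m` points (`sum_supn_le`): the first becomes a harmonic sum, the
second the tail of `∑ m^{-1-2γ}`. All sums are taken over arbitrary finite sets, so that absolute
convergence and the bound come out together.
-/

open scoped Classical

/-- `ℤ²_* = ℤ² ∖ {0}`. -/
abbrev Zstar : Type := {k : ℤ × ℤ // k ≠ 0}

/-- Euclidean norm of a lattice point. -/
noncomputable def znorm (a : ℤ × ℤ) : ℝ := Real.sqrt ((a.1 : ℝ) ^ 2 + (a.2 : ℝ) ^ 2)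

/-- `a^⊥ = (−a₂, a₁)`. -/
def zperp (a : ℤ × ℤ) : ℤ × ℤ := (-a.2, a.1)

/-- Dot product of lattice points. -/
def zdot (a b : ℤ × ℤ) : ℤ := a.1 * b.1 + a.2 * b.2

/-- Extension of a function on `ℤ²_*` to `ℤ²` by zero. -/
noncomputable def zext (ω : Zstar → ℂ) : ℤ × ℤ → ℂ :=
  fun k => if h : k ≠ 0 then ω ⟨k, h⟩ else 0

/-- The `ℓ`-th term of the series defining the Navier–Stokes nonlinearity `F_k(ω)`. -/
noncomputable def Fterm (ω : Zstar → ℂ) (k : Zstar) (ℓ : ℤ × ℤ) : ℂ :=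
  (((zdot (zperp ℓ) k.1 : ℝ) / (znorm ℓ) ^ 2 : ℝ) : ℂ) * zext ω ℓ * zext ω (k.1 - ℓ)

/-- The Navier–Stokes nonlinearity `F_k(ω) = 2i ∑_{j+ℓ=k} ((ℓ^⊥·k)/|ℓ|²) ω_ℓ ω_j`. -/
noncomputable def Fns (ω : Zstar → ℂ) (k : Zstar) : ℂ :=
  2 * Complex.I * ∑' ℓ : ℤ × ℤ, Fterm ω k ℓ

/-! ### Lattice norms -/

/-- The sup norm of a lattice point. -/
def supn (a : ℤ × ℤ) : ℕ := max a.1.natAbs a.2.natAbs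

lemma znorm_eq (a : ℤ × ℤ) : znorm a = ‖((a.1 : ℝ) + (a.2 : ℝ) * Complex.I : ℂ)‖ := by
  rw [Complex.norm_add_mul_I]; rfl

lemma znorm_nonneg (a : ℤ × ℤ) : 0 ≤ znorm a := Real.sqrt_nonneg _

lemma znorm_le_add (k l : ℤ × ℤ) : znorm k ≤ znorm l + znorm (k - l) := by
  rw [znorm_eq, znorm_eq, znorm_eq]
  refine le_trans (le_of_eq ?_) (norm_add_le _ _)
  congr 1
  simp only [Prod.fst_sub, Prod.snd_sub]
  push_cast
  ring

lemma supn_sq (a : ℤ × ℤ) :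
    (supn a : ℝ) ^ 2 = max ((a.1 : ℝ) ^ 2) ((a.2 : ℝ) ^ 2) := by
  have h1 : ((a.1.natAbs : ℕ) : ℝ) = |(a.1 : ℝ)| := by rw [Nat.cast_natAbs, Int.cast_abs]
  have h2 : ((a.2.natAbs : ℕ) : ℝ) = |(a.2 : ℝ)| := by rw [Nat.cast_natAbs, Int.cast_abs]
  unfold supn
  push_cast
  rw [h1, h2]
  rcases le_total |(a.1 : ℝ)| |(a.2 : ℝ)| with h | h
  · rw [max_eq_right h, max_eq_right (sq_le_sq.2 h), sq_abs]
  · rw [max_eq_left h, max_eq_left (sq_le_sq.2 h), sq_abs]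

lemma supn_le (a : ℤ × ℤ) : (supn a : ℝ) ≤ znorm a := by
  apply Real.le_sqrt_of_sq_le
  rw [supn_sq]
  apply max_le <;> nlinarith [sq_nonneg (a.1 : ℝ), sq_nonneg (a.2 : ℝ)]

lemma znorm_le (a : ℤ × ℤ) : znorm a ≤ 2 * supn a := by
  apply Real.sqrt_le_iff.2 ⟨by positivity, ?_⟩
  rw [mul_pow, supn_sq]
  nlinarith [le_max_left ((a.1 : ℝ) ^ 2) ((a.2 : ℝ) ^ 2),
    le_max_right ((a.1 : ℝ) ^ 2) ((a.2 : ℝ) ^ 2), sq_nonneg (a.1 : ℝ)]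

lemma supn_pos {a : ℤ × ℤ} (h : a ≠ 0) : 0 < supn a := by
  unfold supn
  by_contra hc
  apply h
  ext <;> simp <;> omega

lemma znorm_pos {a : ℤ × ℤ} (h : a ≠ 0) : 0 < znorm a :=
  lt_of_lt_of_le (by exact_mod_cast supn_pos h) (supn_le a)

/-! ### Lattice sums -/

/-- Summation over the squares `supn ℓ = m`, each of which holds `8 m` lattice points. -/
lemma sum_supn_le (f : ℕ → ℝ) (hf : ∀ n, 0 ≤ f n) (h0 : f 0 = 0) (T : Finset (ℤ × ℤ)) :
    ∃ N : ℕ, ∑ l ∈ T, f (supn l) ≤ ∑ n ∈ Finset.range N, 8 * (n : ℝ) * f n := by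
  refine ⟨T.sup supn + 1, ?_⟩
  have hm : ∀ l ∈ T, supn l ∈ Finset.range (T.sup supn + 1) := fun l hl =>
    Finset.mem_range.2 (Nat.lt_succ_of_le (Finset.le_sup (f := supn) hl))
  rw [← Finset.sum_fiberwise_of_maps_to hm]
  refine Finset.sum_le_sum fun n _ => ?_
  rcases Nat.eq_zero_or_pos n with rfl | hn
  · rw [Finset.sum_eq_zero]
    · simp
    · intro l hl
      rw [(Finset.mem_filter.1 hl).2, h0]
  · have hc : (T.filter fun l => supn l = n).card ≤ 8 * n := by
      rw [← Int.card_box hn.ne']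
      refine Finset.card_le_card fun l hl => ?_
      exact Int.mem_box.2 (Finset.mem_filter.1 hl).2
    calc ∑ l ∈ T with supn l = n, f (supn l) = ∑ l ∈ T with supn l = n, f n :=
          Finset.sum_congr rfl fun l hl => by rw [(Finset.mem_filter.1 hl).2]
      _ = ((T.filter fun l => supn l = n).card : ℝ) * f n := by simp
      _ ≤ 8 * (n : ℝ) * f n := by
          apply mul_le_mul_of_nonneg_right _ (hf n)
          exact_mod_cast hc

/-- The weight `1/|ℓ|` restricted to `|ℓ| ≤ R/2`; it vanishes at `ℓ = 0`, as `0⁻¹ = 0`. -/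
noncomputable def gnear (R : ℝ) (l : ℤ × ℤ) : ℝ := if znorm l ≤ R / 2 then (znorm l)⁻¹ else 0

/-- The weight `|ℓ|^{-1-γ}` restricted to `|ℓ| > R/2`. -/
noncomputable def gfar (γ R : ℝ) (l : ℤ × ℤ) : ℝ :=
  if R / 2 < znorm l then (znorm l) ^ (-1 - γ) else 0

lemma gnear_nonneg (R : ℝ) (l : ℤ × ℤ) : 0 ≤ gnear R l := by
  unfold gnear
  split_ifs
  · exact inv_nonneg.2 (znorm_nonneg _)
  · exact le_rfl

lemma gfar_nonneg (γ R : ℝ) (l : ℤ × ℤ) : 0 ≤ gfar γ R l := by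
  unfold gfar
  split_ifs
  · exact Real.rpow_nonneg (znorm_nonneg _) _
  · exact le_rfl

lemma harmonic_sum_le (x : ℝ) (hx : 1 ≤ x) (N : ℕ) :
    ∑ n ∈ Finset.range N, (if (n : ℝ) ≤ x then ((n : ℝ))⁻¹ else 0) ≤ 1 + Real.log x := by
  rw [← Finset.sum_filter]
  have hx0 : 0 ≤ x := by linarith
  have hsub : ∑ n ∈ (Finset.range N).filter (fun n : ℕ => (n : ℝ) ≤ x), ((n : ℝ))⁻¹
      ≤ ∑ n ∈ Finset.range (⌊x⌋₊ + 1), ((n : ℝ))⁻¹ := by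
    apply Finset.sum_le_sum_of_subset_of_nonneg
    · intro n hn
      rw [Finset.mem_range, Nat.lt_succ_iff]
      exact Nat.le_floor (Finset.mem_filter.1 hn).2
    · intros; positivity
  rw [Finset.sum_range_succ'] at hsub
  have h := harmonic_floor_le_one_add_log x hx
  unfold harmonic at h
  push_cast at h hsub
  simp only [inv_zero, add_zero] at hsub
  exact hsub.trans h

lemma sum_gnear_sq_le {R : ℝ} (hR : 2 ≤ R) (T : Finset (ℤ × ℤ)) :
    ∑ l ∈ T, gnear R l ^ 2 ≤ 16 * Real.log R := by
  set f : ℕ → ℝ := fun n => if (n : ℝ) ≤ R / 2 then ((n : ℝ) ^ 2)⁻¹ else 0 with hf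
  have hle : ∀ l, gnear R l ^ 2 ≤ f (supn l) := by
    intro l
    have hs := supn_le l
    by_cases h : znorm l ≤ R / 2
    · simp only [gnear, hf, if_pos h, if_pos (hs.trans h)]
      by_cases h0 : l = 0
      · subst h0
        simp [znorm, supn]
      · have : (0 : ℝ) < supn l := by exact_mod_cast supn_pos h0
        rw [inv_pow]
        gcongr
    · simp only [gnear, if_neg h, hf, zero_pow two_ne_zero]
      split_ifs <;> positivity
  obtain ⟨N, hN⟩ := sum_supn_le f (fun n => by simp only [hf]; split_ifs <;> positivity)
    (by simp [hf]) T
  have h2 : ∑ n ∈ Finset.range N, 8 * (n : ℝ) * f n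
      = 8 * ∑ n ∈ Finset.range N, (if (n : ℝ) ≤ R / 2 then ((n : ℝ))⁻¹ else 0) := by
    rw [Finset.mul_sum]
    refine Finset.sum_congr rfl fun n _ => ?_
    simp only [hf]
    split_ifs
    · rcases Nat.eq_zero_or_pos n with rfl | hn
      · simp
      · have : (0 : ℝ) < n := by exact_mod_cast hn
        field_simp
    · simp
  have h3 := harmonic_sum_le (R / 2) (by linarith) N
  have h4 : Real.log (R / 2) = Real.log R - Real.log 2 :=
    Real.log_div (by linarith) (by norm_num)
  have h5 : Real.log 2 ≤ Real.log R := Real.log_le_log (by norm_num) hR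
  have h6 := Real.log_two_gt_d9
  have := (Finset.sum_le_sum fun l (_ : l ∈ T) => hle l).trans hN
  linarith

/-- A discrete form of `∫ₙ^{n+1} x^{-1-s} dx = (n^{-s} - (n+1)^{-s}) / s`. -/
lemma rpow_diff_ge {s x : ℝ} (hs : 0 < s) (hx : 1 ≤ x) :
    x ^ (-1 - s) ≤ 2 ^ (1 + s) / s * (x ^ (-s) - (x + 1) ^ (-s)) := by
  have hx0 : 0 < x := by linarith
  have h1 : 1 + s / (2 * x) ≤ ((x + 1) / x) ^ s := by
    have hp : 0 < (x + 1) / x := by positivity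
    have h2 : 1 - ((x + 1) / x)⁻¹ ≤ Real.log ((x + 1) / x) := Real.one_sub_inv_le_log_of_pos hp
    have h3 : 1 / (2 * x) ≤ 1 - ((x + 1) / x)⁻¹ := by
      have : 1 - ((x + 1) / x)⁻¹ = 1 / (x + 1) := by field_simp; ring
      rw [this]
      apply one_div_le_one_div_of_le <;> linarith
    rw [Real.rpow_def_of_pos hp]
    have h4 := Real.add_one_le_exp (Real.log ((x + 1) / x) * s)
    have h5 : s / (2 * x) = 1 / (2 * x) * s := by ring
    nlinarith [mul_le_mul_of_nonneg_right (h3.trans h2) hs.le]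
  have h6 : x ^ (-s) = (x + 1) ^ (-s) * ((x + 1) / x) ^ s := by
    rw [Real.div_rpow (by positivity) hx0.le, Real.rpow_neg hx0.le, Real.rpow_neg (by positivity)]
    have := Real.rpow_pos_of_pos (show 0 < x + 1 by linarith) s
    field_simp
  have h7 : (2 * x) ^ (-s) ≤ (x + 1) ^ (-s) :=
    Real.rpow_le_rpow_of_nonpos (by positivity) (by linarith) (by linarith)
  have h8 : (2 * x) ^ (-s) * (s / (2 * x)) ≤ x ^ (-s) - (x + 1) ^ (-s) := by
    have : x ^ (-s) - (x + 1) ^ (-s) = (x + 1) ^ (-s) * (((x + 1) / x) ^ s - 1) := by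
      rw [h6]; ring
    rw [this]
    have : 0 ≤ s / (2 * x) := by positivity
    apply mul_le_mul h7 (by linarith) this (by positivity)
  refine le_trans (le_of_eq ?_) (mul_le_mul_of_nonneg_left h8 (by positivity))
  rw [Real.mul_rpow (by norm_num) hx0.le, Real.rpow_add (by norm_num), sub_eq_add_neg,
    Real.rpow_add hx0, Real.rpow_neg_one, Real.rpow_neg (show (0 : ℝ) ≤ 2 by norm_num) s, Real.rpow_one]
  have := Real.rpow_pos_of_pos (show (0 : ℝ) < 2 by norm_num) s
  field_simp

lemma tail_sum_le {s y : ℝ} (hs : 0 < s) (hy : 0 < y) (N : ℕ) :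
    ∑ n ∈ Finset.range N, (if y < n then (n : ℝ) ^ (-1 - s) else 0)
      ≤ 2 ^ (1 + s) / s * y ^ (-s) := by
  have hC : 0 ≤ 2 ^ (1 + s) / s := by positivity
  -- the strengthening by `(max N y)^{-s}` makes the telescoping bound inductive
  have key : ∑ n ∈ Finset.range N, (if y < n then (n : ℝ) ^ (-1 - s) else 0)
      ≤ 2 ^ (1 + s) / s * (y ^ (-s) - (max (N : ℝ) y) ^ (-s)) := by
    induction N with
    | zero => simp [max_eq_right hy.le]
    | succ N ih =>
      rw [Finset.sum_range_succ]
      push_cast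
      by_cases h : y < N
      · rw [if_pos h]
        rw [max_eq_left h.le] at ih
        rw [max_eq_left (by linarith)]
        have hN : (1 : ℝ) ≤ N := by
          have : (0 : ℝ) < N := hy.trans h
          exact_mod_cast this
        have := rpow_diff_ge hs hN
        linarith
      · rw [if_neg h, add_zero]
        refine ih.trans (mul_le_mul_of_nonneg_left (sub_le_sub_left ?_ _) hC)
        apply Real.rpow_le_rpow_of_nonpos (lt_max_of_lt_right hy) _ (by linarith)
        exact max_le_max (by linarith) le_rfl
  refine key.trans (mul_le_mul_of_nonneg_left ?_ hC)
  have : 0 ≤ (max (N : ℝ) y) ^ (-s) := by positivity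
  linarith

lemma sum_gfar_sq_le {γ R : ℝ} (hγ : 0 < γ) (hR : 2 ≤ R) (T : Finset (ℤ × ℤ)) :
    ∑ l ∈ T, gfar γ R l ^ 2
      ≤ 8 * (2 ^ (1 + 2 * γ) / (2 * γ) * (R / 4) ^ (-(2 * γ))) := by
  set f : ℕ → ℝ := fun n => if R / 4 < n then (n : ℝ) ^ (-2 - 2 * γ) else 0 with hf
  have hle : ∀ l, gfar γ R l ^ 2 ≤ f (supn l) := by
    intro l
    have hs := supn_le l
    have hs2 := znorm_le l
    by_cases h : R / 2 < znorm l
    · have h' : R / 4 < supn l := by linarith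
      simp only [gfar, hf, if_pos h, if_pos h']
      rw [← Real.rpow_natCast, ← Real.rpow_mul (znorm_nonneg _)]
      have : (-1 - γ) * ((2 : ℕ) : ℝ) = -2 - 2 * γ := by push_cast; ring
      rw [this]
      exact Real.rpow_le_rpow_of_nonpos (by linarith) hs (by linarith)
    · simp only [gfar, if_neg h, hf, zero_pow two_ne_zero]
      split_ifs <;> positivity
  obtain ⟨N, hN⟩ := sum_supn_le f (fun n => by simp only [hf]; split_ifs <;> positivity)
    (by simp only [hf]; rw [if_neg]; push_cast; linarith) T
  have h2 : ∑ n ∈ Finset.range N, 8 * (n : ℝ) * f n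
      = 8 * ∑ n ∈ Finset.range N, (if R / 4 < n then (n : ℝ) ^ (-1 - 2 * γ) else 0) := by
    rw [Finset.mul_sum]
    refine Finset.sum_congr rfl fun n _ => ?_
    simp only [hf]
    split_ifs with h
    · have : (0 : ℝ) < n := by linarith
      rw [show -1 - 2 * γ = 1 + (-2 - 2 * γ) by ring, Real.rpow_add this, Real.rpow_one]
      ring
    · simp
  have h3 := tail_sum_le (s := 2 * γ) (y := R / 4) (by linarith) (by linarith) N
  have := (Finset.sum_le_sum fun l (_ : l ∈ T) => hle l).trans hN
  linarith

/-! ### Estimates for the nonlinearity -/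

lemma abs_zdot_le (l k : ℤ × ℤ) : |(zdot (zperp l) k : ℝ)| ≤ znorm l * znorm k := by
  unfold znorm
  rw [← Real.sqrt_mul (by positivity)]
  apply Real.abs_le_sqrt
  simp only [zdot, zperp]
  push_cast
  nlinarith [sq_nonneg ((l.1 : ℝ) * k.1 + l.2 * k.2)]

lemma zext_zero (ω : Zstar → ℂ) : zext ω 0 = 0 := by simp [zext]

lemma zext_coe (ω : Zstar → ℂ) (j : Zstar) : zext ω j.1 = ω j := by
  simp [zext, j.2]

/-- Finite partial sums of `∑ |ω_j|²`, for `ω` extended by zero and reindexed injectively. -/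
lemma sum_zext_sq_le {ω : Zstar → ℂ} {S : ℝ} (hs : Summable fun j : Zstar => ‖ω j‖ ^ 2)
    (hS : (∑' j : Zstar, ‖ω j‖ ^ 2) ≤ S ^ 2) {e : ℤ × ℤ → ℤ × ℤ}
    (he : Function.Injective e) (T : Finset (ℤ × ℤ)) :
    ∑ l ∈ T, ‖zext ω (e l)‖ ^ 2 ≤ S ^ 2 := by
  have hinj : Function.Injective (Subtype.val : Zstar → ℤ × ℤ) := Subtype.val_injective
  have hz : ∀ x ∉ Set.range (Subtype.val : Zstar → ℤ × ℤ), ‖zext ω x‖ ^ 2 = 0 := by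
    intro x hx
    have : x = 0 := by
      by_contra h
      exact hx ⟨⟨x, h⟩, rfl⟩
    simp [this, zext_zero]
  have hh : HasSum (fun x => ‖zext ω x‖ ^ 2) (∑' j : Zstar, ‖ω j‖ ^ 2) := by
    rw [← hinj.hasSum_iff hz]
    convert hs.hasSum using 2 with j
    simp [zext_coe]
  rw [← Finset.sum_image (f := fun x => ‖zext ω x‖ ^ 2) (g := e) he.injOn]
  exact (sum_le_hasSum _ (fun _ _ => by positivity) hh).trans hS

lemma cauchy_schwarz_bound {T : Finset (ℤ × ℤ)} {g w : ℤ × ℤ → ℝ} {A S : ℝ} (hS : 0 ≤ S)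
    (hg : ∑ l ∈ T, g l ^ 2 ≤ A) (hw : ∑ l ∈ T, w l ^ 2 ≤ S ^ 2) :
    ∑ l ∈ T, g l * w l ≤ Real.sqrt A * S := by
  refine (Real.sum_mul_le_sqrt_mul_sqrt T g w).trans ?_
  apply mul_le_mul (Real.sqrt_le_sqrt hg) _ (Real.sqrt_nonneg _) (Real.sqrt_nonneg _)
  rw [← Real.sqrt_sq hS]
  exact Real.sqrt_le_sqrt hw

lemma norm_zext_le {γ D : ℝ} {ω : Zstar → ℂ} (hD : 0 ≤ D)
    (h : ∀ j : Zstar, znorm j.1 ^ γ * ‖ω j‖ ≤ D) (a : ℤ × ℤ) : znorm a ^ γ * ‖zext ω a‖ ≤ D := by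
  by_cases ha : a = 0
  · simpa [ha, zext_zero] using hD
  · simpa [zext, ha] using h ⟨a, ha⟩

/-- Whichever of `ℓ` and `k - ℓ` has norm at least `|k|/2` is estimated by the weighted sup norm. -/
lemma norm_Fterm_le {γ D : ℝ} (hγ : 0 < γ) (hD : 0 ≤ D) {ω : Zstar → ℂ} {k : Zstar}
    (hk : 2 ≤ znorm k.1) (h : ∀ j : Zstar, znorm j.1 ^ γ * ‖ω j‖ ≤ D) (l : ℤ × ℤ) :
    ‖Fterm ω k l‖ ≤ znorm k.1 * D * ((znorm k.1 / 2) ^ (-γ) * (gnear (znorm k.1) l * ‖zext ω l‖)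
      + gfar γ (znorm k.1) l * ‖zext ω (k.1 - l)‖) := by
  set R := znorm k.1 with hRdef
  have hR0 : 0 < R := by linarith
  by_cases hl : l = 0
  · have := gnear_nonneg R l
    have := gfar_nonneg γ R l
    have h0 : Fterm ω k l = 0 := by simp [Fterm, hl, zext_zero]
    rw [h0, norm_zero]
    positivity
  have hp : 0 < znorm l := znorm_pos hl
  have h1 : ‖Fterm ω k l‖ ≤ R * (znorm l)⁻¹ * ‖zext ω l‖ * ‖zext ω (k.1 - l)‖ := by
    unfold Fterm
    rw [norm_mul, norm_mul, Complex.norm_real, Real.norm_eq_abs, abs_div, abs_of_nonneg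
      (sq_nonneg (znorm l))]
    have : |(zdot (zperp l) k.1 : ℝ)| / znorm l ^ 2 ≤ R * (znorm l)⁻¹ := by
      rw [div_le_iff₀ (by positivity)]
      have := abs_zdot_le l k.1
      have e : R * (znorm l)⁻¹ * znorm l ^ 2 = znorm l * R := by field_simp
      rw [e]
      exact this
    gcongr
  refine h1.trans ?_
  by_cases hc : znorm l ≤ R / 2
  · have e1 : gnear R l = (znorm l)⁻¹ := if_pos hc
    have e2 : gfar γ R l = 0 := if_neg (not_lt.2 hc)
    have ht := znorm_le_add k.1 l
    have hb := norm_zext_le hD h (k.1 - l)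
    have hj : ‖zext ω (k.1 - l)‖ ≤ D * (R / 2) ^ (-γ) := by
      rw [Real.rpow_neg (by positivity), ← div_eq_mul_inv, le_div_iff₀ (by positivity), mul_comm]
      refine le_trans ?_ hb
      gcongr
      linarith
    rw [e1, e2]
    calc R * (znorm l)⁻¹ * ‖zext ω l‖ * ‖zext ω (k.1 - l)‖
        ≤ R * (znorm l)⁻¹ * ‖zext ω l‖ * (D * (R / 2) ^ (-γ)) := by gcongr
      _ = _ := by ring
  · have e1 : gnear R l = 0 := if_neg hc
    have e2 : gfar γ R l = (znorm l) ^ (-1 - γ) := if_pos (not_le.1 hc)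
    have hb := norm_zext_le hD h l
    have hj : ‖zext ω l‖ ≤ D * (znorm l) ^ (-γ) := by
      rw [Real.rpow_neg (by positivity), ← div_eq_mul_inv, le_div_iff₀ (by positivity), mul_comm]
      exact hb
    rw [e1, e2, sub_eq_add_neg (-1 : ℝ) γ, Real.rpow_add hp, Real.rpow_neg_one]
    calc R * (znorm l)⁻¹ * ‖zext ω l‖ * ‖zext ω (k.1 - l)‖
        ≤ R * (znorm l)⁻¹ * (D * (znorm l) ^ (-γ)) * ‖zext ω (k.1 - l)‖ := by gcongr
      _ = _ := by ring

/-- for every `γ > 0` there is `C = C(γ) > 0` such that for all `D > 0`,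
`S > 0`, all `k ∈ ℤ²_*` with `|k| ≥ 2` and all `ω` with `|ω|_{∞,γ} ≤ D` and `‖ω‖ ≤ S`,
the series defining `F_k(ω)` converges absolutely and
`|F_k(ω)| ≤ C · S · D · |k| · √(log |k|) / |k|^γ`. -/
theorem stmt0 :
    ∀ γ : ℝ, 0 < γ → ∃ C : ℝ, 0 < C ∧
      ∀ (D S : ℝ), 0 < D → 0 < S →
      ∀ k : Zstar, 2 ≤ znorm k.1 →
      ∀ ω : Zstar → ℂ,
        (∀ j : Zstar, znorm j.1 ^ γ * ‖ω j‖ ≤ D) →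
        (Summable fun j : Zstar => ‖ω j‖ ^ 2) →
        (∑' j : Zstar, ‖ω j‖ ^ 2) ≤ S ^ 2 →
        (Summable fun ℓ : ℤ × ℤ => ‖Fterm ω k ℓ‖) ∧
        ‖Fns ω k‖ ≤ C * S * D * znorm k.1 * Real.sqrt (Real.log (znorm k.1)) / znorm k.1 ^ γ := by
  intro γ hγ
  set B : ℝ := Real.sqrt (8 * (2 ^ (1 + 2 * γ) / (2 * γ))) * 4 ^ γ with hB
  have hB0 : 0 ≤ B := by positivity
  refine ⟨2 * (4 * 2 ^ γ + 2 * B), by positivity, ?_⟩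
  intro D S hD hS k hk ω hω hsum hnorm
  have hF := norm_Fterm_le hγ hD.le hk hω
  set R := znorm k.1 with hRdef
  have hR0 : 0 < R := by linarith
  set Λ := Real.sqrt (Real.log R) with hΛ
  have hlog : 1 / 4 ≤ Real.log R := by
    have h5 : Real.log 2 ≤ Real.log R := Real.log_le_log (by norm_num) hk
    have h6 := Real.log_two_gt_d9
    linarith
  have hΛ1 : 1 / 2 ≤ Λ := Real.le_sqrt_of_sq_le (by norm_num; linarith)
  have hnear : Real.sqrt (16 * Real.log R) = 4 * Λ := by
    rw [Real.sqrt_mul (by norm_num), show (16 : ℝ) = 4 ^ 2 by norm_num,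
      Real.sqrt_sq (by norm_num)]
  have hfar : Real.sqrt (8 * (2 ^ (1 + 2 * γ) / (2 * γ) * (R / 4) ^ (-(2 * γ)))) = B * R ^ (-γ) := by
    rw [← mul_assoc, Real.sqrt_mul (by positivity), hB, mul_assoc]
    congr 1
    have : (R / 4) ^ (-(2 * γ)) = ((R / 4) ^ (-γ)) ^ 2 := by
      rw [← Real.rpow_natCast, ← Real.rpow_mul (by positivity)]
      congr 1
      push_cast
      ring
    rw [this, Real.sqrt_sq (by positivity), Real.div_rpow hR0.le (by norm_num),
      Real.rpow_neg (show (0 : ℝ) ≤ 4 by norm_num), div_inv_eq_mul, mul_comm]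
  have hhalf : (R / 2) ^ (-γ) = 2 ^ γ * R ^ (-γ) := by
    rw [Real.div_rpow hR0.le (by norm_num), Real.rpow_neg (show (0 : ℝ) ≤ 2 by norm_num),
      div_inv_eq_mul, mul_comm]
  have hRγ : 0 < R ^ (-γ) := by positivity
  have hT : ∀ T : Finset (ℤ × ℤ), ∑ l ∈ T, ‖Fterm ω k l‖
      ≤ (4 * 2 ^ γ + 2 * B) * S * D * R * Λ * R ^ (-γ) := by
    intro T
    have c1 := cauchy_schwarz_bound hS.le (sum_gnear_sq_le hk T)
      (sum_zext_sq_le hsum hnorm Function.injective_id T)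
    have c2 := cauchy_schwarz_bound hS.le (sum_gfar_sq_le hγ hk T)
      (sum_zext_sq_le hsum hnorm (sub_right_injective (b := k.1)) T)
    simp only [id] at c1
    rw [hnear] at c1
    rw [hfar] at c2
    calc ∑ l ∈ T, ‖Fterm ω k l‖
        ≤ R * D * ((R / 2) ^ (-γ) * ∑ l ∈ T, gnear R l * ‖zext ω l‖
          + ∑ l ∈ T, gfar γ R l * ‖zext ω (k.1 - l)‖) := by
          refine (Finset.sum_le_sum fun l _ => hF l).trans (le_of_eq ?_)
          rw [← Finset.mul_sum, Finset.sum_add_distrib, ← Finset.mul_sum]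
      _ ≤ R * D * ((R / 2) ^ (-γ) * (4 * Λ * S) + B * R ^ (-γ) * S) := by gcongr
      -- `1 ≤ 2 Λ`, because `log R ≥ log 2 ≥ 1/4`
      _ ≤ R * D * ((R / 2) ^ (-γ) * (4 * Λ * S) + B * R ^ (-γ) * S * (2 * Λ)) := by
          have : B * R ^ (-γ) * S ≤ B * R ^ (-γ) * S * (2 * Λ) :=
            le_mul_of_one_le_right (by positivity) (by linarith)
          exact mul_le_mul_of_nonneg_left (add_le_add_right this _) (by positivity)
      _ = _ := by rw [hhalf]; ring
  have hsF : Summable fun l : ℤ × ℤ => ‖Fterm ω k l‖ :=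
    summable_of_sum_le (fun _ => norm_nonneg _) hT
  refine ⟨hsF, ?_⟩
  have h1 : ‖∑' l, Fterm ω k l‖ ≤ (4 * 2 ^ γ + 2 * B) * S * D * R * Λ * R ^ (-γ) :=
    (norm_tsum_le_tsum_norm hsF).trans (hsF.tsum_le_of_sum_le hT)
  unfold Fns
  rw [norm_mul, norm_mul, Complex.norm_I, Complex.norm_ofNat, mul_one, div_eq_mul_inv,
    ← Real.rpow_neg hR0.le]
  linarith
end

section
/- Let μ and ν be mutually absolutely continuous probability measures on a measurable space with finite relative entropy H(μ|ν) = ∫ log(dμ/dν) dμ, and let f be a measurable real-valued function with f integrable with respect to μ and e^f integrable with respect to ν. Then ∫ f dμ ≤ H(μ|ν) + log(∫ e^f dν). -/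
/-!
Let `π = ν.tilted f` be the probability measure with `ν`-density `e^f / ∫ e^f dν`.
Then `log (dμ/dπ) = log (dμ/dν) - f + log ∫ e^f dν`, so integrating against `μ` gives
`H(μ|π) = H(μ|ν) - ∫ f dμ + log ∫ e^f dν`, and the claim is Gibbs' inequality `0 ≤ H(μ|π)`.
-/

open MeasureTheory

/-- entropy inequality `∫ f dμ ≤ H(μ|ν) + log ∫ e^f dν` for mutually
absolutely continuous probability measures with finite relative entropy. -/
theorem stmt9 {W : Type*} [MeasurableSpace W]
    (μ ν : Measure W) [IsProbabilityMeasure μ] [IsProbabilityMeasure ν]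
    (hμν : μ ≪ ν) (hνμ : ν ≪ μ)
    (hH : Integrable (fun x => Real.log ((μ.rnDeriv ν x).toReal)) μ)
    (f : W → ℝ) (hf : Measurable f)
    (hfμ : Integrable f μ)
    (hefν : Integrable (fun x => Real.exp (f x)) ν) :
    ∫ x, f x ∂μ
      ≤ (∫ x, Real.log ((μ.rnDeriv ν x).toReal) ∂μ)
        + Real.log (∫ x, Real.exp (f x) ∂ν) := by
  have hH' : Integrable (llr μ ν) μ := hH
  have hac : μ ≪ ν.tilted f := hμν.trans (absolutelyContinuous_tilted hefν)
  have := isProbabilityMeasure_tilted hefν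
  have gibbs := InformationTheory.integral_llr_add_sub_measure_univ_nonneg hac
    (integrable_llr_tilted_right hμν hfμ hH' hefν)
  rw [integral_llr_tilted_right hμν hfμ hefν hH'] at gibbs
  simp only [probReal_univ, llr_def] at gibbs
  linarith
end

section
/- Let μ and ν be mutually absolutely continuous probability measures on a measurable space with finite relative entropy H(μ|ν) = ∫ log(dμ/dν) dμ. Then for every c > 0 and every measurable set A, μ(A) ≤ (1/c) · H(μ|ν) + (1/c) · log((e^c − 1) · ν(A) + 1). -/
open MeasureTheory

/-!
The inequality is the Gibbs (Donsker–Varadhan) variational bound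
`∫ f dμ ≤ H(μ|ν) + log ∫ exp f dν` for `f = c • 1_A`, for which `∫ f dμ = c μ(A)` and
`∫ exp f dν = (e^c - 1) ν(A) + 1`. The variational bound says that the relative entropy of `μ`
with respect to the exponentially tilted probability measure `dν_f ∝ exp f dν` is nonnegative:
`H(μ|ν_f) = H(μ|ν) - ∫ f dμ + log ∫ exp f dν`.
-/

/-- Gibbs variational inequality (the easy half of the Donsker–Varadhan formula). -/
lemma integral_le_integral_llr_add_log {W : Type*} [MeasurableSpace W]
    (μ ν : Measure W) [IsProbabilityMeasure μ] [IsProbabilityMeasure ν] (hμν : μ ≪ ν)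
    (hH : Integrable (llr μ ν) μ) {f : W → ℝ} (hfμ : Integrable f μ)
    (hfν : Integrable (fun x => Real.exp (f x)) ν) :
    ∫ x, f x ∂μ ≤ ∫ x, llr μ ν x ∂μ + Real.log (∫ x, Real.exp (f x) ∂ν) := by
  have : IsProbabilityMeasure (ν.tilted f) := isProbabilityMeasure_tilted hfν
  have hac : μ ≪ ν.tilted f := hμν.trans (absolutelyContinuous_tilted hfν)
  have hkl := InformationTheory.toReal_klDiv_of_measure_eq hac (by simp)
  have hnn : 0 ≤ ∫ x, llr μ (ν.tilted f) x ∂μ := hkl ▸ ENNReal.toReal_nonneg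
  rw [integral_llr_tilted_right hμν hfμ hfν hH] at hnn
  linarith

theorem stmt10 {W : Type*} [MeasurableSpace W]
    (μ ν : Measure W) [IsProbabilityMeasure μ] [IsProbabilityMeasure ν]
    (hμν : μ ≪ ν) (hνμ : ν ≪ μ)
    (hH : Integrable (fun x => Real.log ((μ.rnDeriv ν x).toReal)) μ) :
    ∀ c : ℝ, 0 < c → ∀ A : Set W, MeasurableSet A →
      (μ A).toReal
        ≤ (1 / c) * (∫ x, Real.log ((μ.rnDeriv ν x).toReal) ∂μ)
          + (1 / c) * Real.log ((Real.exp c - 1) * (ν A).toReal + 1) := by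
  intro c hc A hA
  have hexp : (fun x => Real.exp (A.indicator (fun _ => c) x))
      = fun x => A.indicator (fun _ => Real.exp c - 1) x + 1 := by
    ext x
    by_cases hx : x ∈ A <;> simp [hx]
  have hint : Integrable (A.indicator fun _ : W => Real.exp c - 1) ν :=
    (integrable_const _).indicator hA
  have key := integral_le_integral_llr_add_log μ ν hμν hH
    (f := A.indicator fun _ => c) ((integrable_const _).indicator hA)
    (hexp ▸ hint.add (integrable_const 1))
  rw [hexp, integral_add hint (integrable_const 1), integral_indicator_const _ hA,
    integral_indicator_const _ hA] at key
  simp only [smul_eq_mul, integral_const, mul_one, Measure.real, llr_def] at key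
  rw [mul_comm (Real.exp c - 1), ← mul_add, one_div, ← div_eq_inv_mul, le_div_iff₀ hc]
  simpa using key
end

section
/- Let (X, 𝒳) be a measurable space and let P be a Markov probability kernel on X such that P(x, ·) and P(y, ·) are mutually absolutely continuous for all x, y ∈ X. Then any two invariant probability measures μ₁ and μ₂ of P (i.e. measures satisfying μᵢ(A) = ∫_X P(x, A) μᵢ(dx) for all A ∈ 𝒳) are mutually absolutely continuous. -/
open MeasureTheory ProbabilityTheory

/-- If `ν A = 0` then invariance of `ν` gives `P x A = 0` for `ν`-almost every `x`, hence for at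
least one `x` as `ν ≠ 0`. Equivalence of the transition measures spreads this to all `y`, and
integrating against `μ` gives `μ A = 0`. -/
theorem absolutelyContinuous_of_invariant {X : Type*} [MeasurableSpace X]
    (P : Kernel X X) (hP : ∀ x y : X, P x ≪ P y)
    (μ ν : Measure X) [IsProbabilityMeasure ν]
    (hμ : ∀ A : Set X, MeasurableSet A → μ A = ∫⁻ x, P x A ∂μ)
    (hν : ∀ A : Set X, MeasurableSet A → ν A = ∫⁻ x, P x A ∂ν) :
    μ ≪ ν := by
  refine Measure.AbsolutelyContinuous.mk fun A hA h0 => ?_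
  rw [hν A hA, lintegral_eq_zero_iff (P.measurable_coe hA)] at h0
  obtain ⟨x, hx⟩ := h0.exists
  have hall : ∀ y, P y A = 0 := fun y => hP y x hx
  simp [hμ A hA, hall]

/-- if the Markov kernel `P` has mutually absolutely continuous transition
measures `P(x,·) ∼ P(y,·)` for all `x, y`, then any two invariant probability measures of
`P` are mutually absolutely continuous. -/
theorem stmt16 {X : Type*} [MeasurableSpace X]
    (P : Kernel X X) [IsMarkovKernel P]
    (hP : ∀ x y : X, P x ≪ P y)
    (μ₁ μ₂ : Measure X) [IsProbabilityMeasure μ₁] [IsProbabilityMeasure μ₂]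
    (hμ₁ : ∀ A : Set X, MeasurableSet A → μ₁ A = ∫⁻ x, P x A ∂μ₁)
    (hμ₂ : ∀ A : Set X, MeasurableSet A → μ₂ A = ∫⁻ x, P x A ∂μ₂) :
    μ₁ ≪ μ₂ ∧ μ₂ ≪ μ₁ :=
  ⟨absolutelyContinuous_of_invariant P hP μ₁ μ₂ hμ₁ hμ₂,
    absolutelyContinuous_of_invariant P hP μ₂ μ₁ hμ₂ hμ₁⟩
end

section
/- Let (Ω, ℱ, P) be a probability space, let (S, d) be a separable metric space with its Borel σ-algebra, let X_n, Y_n : Ω → S (n = 1, 2, …) be measurable maps such that d(X_n, Y_n) → 0 in probability and such that all the Y_n have the same law (the pushforward measure of P under Y_n is the same probability measure on S for every n), and let G : S → ℝ be bounded and continuous. Then E|G(X_n) − G(Y_n)| → 0 as n → ∞. -/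
/-!
Tightness of the common law `μ` of the `Yₙ` is not available, since `S` need not be complete, so
uniform continuity of `G` on a compact set is replaced by the following. For `ε, r > 0` let
`oscSet G ε r` be the set of points `y` having some `x` with `d(x, y) < r` and
`|G x - G y| > ε`. It is open, decreases with `r`, and by continuity of `G` no point lies in it for
all `r`; hence its `μ`-measure tends to `0` as `r → 0`. If `|G| ≤ C`, then pointwise
`|G(Xₙ) - G(Yₙ)| ≤ ε + 2C · 1{d(Xₙ, Yₙ) ≥ r} + 2C · 1{Yₙ ∈ oscSet G ε r}`.
After taking expectations the last term is `2C · μ(oscSet G ε r)`, which does not depend on `n`: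
choose `r` first to make it small, then let `n → ∞`.
-/

open MeasureTheory Filter

/-- The points `y` within distance less than `r` of which `G` takes a value differing from `G y`
by more than `ε`. -/
def oscSet {S : Type*} [MetricSpace S] (G : S → ℝ) (ε r : ℝ) : Set S :=
  {y | ∃ x, dist x y < r ∧ ε < |G x - G y|}

lemma isOpen_oscSet {S : Type*} [MetricSpace S] {G : S → ℝ} (hG : Continuous G) (ε r : ℝ) :
    IsOpen (oscSet G ε r) := by
  have h : oscSet G ε r = ⋃ x, ({y | dist x y < r} ∩ {y | ε < |G x - G y|}) := by
    ext y
    simp [oscSet]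
  rw [h]
  refine isOpen_iUnion fun x => IsOpen.inter ?_ ?_
  · exact isOpen_lt (by fun_prop) continuous_const
  · exact isOpen_lt continuous_const (by fun_prop)

/-- Continuity from above along `r = 1 / (k + 1)`. -/
lemma tendsto_measureReal_oscSet {S : Type*} [MetricSpace S] [MeasurableSpace S] [BorelSpace S]
    (μ : Measure S) [IsFiniteMeasure μ] {G : S → ℝ} (hG : Continuous G) {ε : ℝ} (hε : 0 < ε) :
    Tendsto (fun k : ℕ => μ.real (oscSet G ε (1 / ((k : ℝ) + 1)))) atTop (nhds 0) := by
  have hanti : Antitone fun k : ℕ => oscSet G ε (1 / ((k : ℝ) + 1)) := by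
    rintro i j hij y ⟨x, hx, hxy⟩
    exact ⟨x, hx.trans_le (Nat.one_div_le_one_div hij), hxy⟩
  have hempty : ⋂ k : ℕ, oscSet G ε (1 / ((k : ℝ) + 1)) = ∅ := by
    refine Set.eq_empty_of_forall_notMem fun y hy => ?_
    obtain ⟨δ, hδ, h⟩ := Metric.continuous_iff.1 hG y ε hε
    obtain ⟨k, hk⟩ := exists_nat_one_div_lt hδ
    obtain ⟨x, hx, hxy⟩ := Set.mem_iInter.1 hy k
    have := h x (hx.trans hk)
    rw [Real.dist_eq] at this
    exact lt_asymm this hxy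
  have h := tendsto_measure_iInter_atTop (μ := μ)
    (fun k : ℕ => (isOpen_oscSet hG ε (1 / ((k : ℝ) + 1))).measurableSet.nullMeasurableSet)
    hanti ⟨0, measure_ne_top _ _⟩
  rw [hempty, measure_empty] at h
  simpa [Measure.real, Function.comp_def] using
    (ENNReal.tendsto_toReal ENNReal.zero_ne_top).comp h

/-- if `d(Xₙ, Yₙ) → 0` in probability, all the `Yₙ` have the same law, and
`G` is bounded and continuous, then `E|G(Xₙ) − G(Yₙ)| → 0`. -/
theorem stmt18 {Ω : Type*} [MeasurableSpace Ω] (P : Measure Ω) [IsProbabilityMeasure P]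
    {S : Type*} [MetricSpace S] [MeasurableSpace S] [BorelSpace S]
    [TopologicalSpace.SeparableSpace S]
    (X Y : ℕ → Ω → S)
    (hX : ∀ n, Measurable (X n)) (hY : ∀ n, Measurable (Y n))
    (hprob : ∀ δ : ℝ, 0 < δ →
      Tendsto (fun n => P {ω | δ ≤ dist (X n ω) (Y n ω)}) atTop (nhds 0))
    (hlaw : ∀ n m : ℕ, P.map (Y n) = P.map (Y m))
    (G : S → ℝ) (hGbd : ∃ C : ℝ, ∀ x, |G x| ≤ C) (hGc : Continuous G) :
    Tendsto (fun n => ∫ ω, |G (X n ω) - G (Y n ω)| ∂P) atTop (nhds 0) := by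
  -- second countability makes `dist (X n ·) (Y n ·)` measurable
  have : SecondCountableTopology S := UniformSpace.secondCountable_of_separable S
  obtain ⟨C, hC⟩ := hGbd
  obtain ⟨ω₀⟩ : Nonempty Ω := P.nonempty_of_neZero
  have hC0 : 0 ≤ C := (abs_nonneg _).trans (hC (Y 0 ω₀))
  have key : ∀ (ε r : ℝ), 0 < ε → ∀ n, ∫ ω, |G (X n ω) - G (Y n ω)| ∂P ≤
      ε + 2 * C * P.real {ω | r ≤ dist (X n ω) (Y n ω)}
        + 2 * C * (P.map (Y 0)).real (oscSet G ε r) := by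
    intro ε r hε n
    have hA : MeasurableSet {ω | r ≤ dist (X n ω) (Y n ω)} :=
      measurableSet_le measurable_const ((hX n).dist (hY n))
    have hO := (isOpen_oscSet hGc ε r).measurableSet
    have hB : MeasurableSet (Y n ⁻¹' oscSet G ε r) := hY n hO
    have hi1 := (integrable_const (μ := P) (2 * C)).indicator hA
    have hi2 := (integrable_const (μ := P) (2 * C)).indicator hB
    have hi3 : Integrable (fun ω => ε + Set.indicator {ω | r ≤ dist (X n ω) (Y n ω)}
        (fun _ => 2 * C) ω) P := (integrable_const ε).add hi1
    have hpt : ∀ ω, |G (X n ω) - G (Y n ω)| ≤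
        ε + Set.indicator {ω | r ≤ dist (X n ω) (Y n ω)} (fun _ => 2 * C) ω
          + Set.indicator (Y n ⁻¹' oscSet G ε r) (fun _ => 2 * C) ω := by
      intro ω
      have hb : |G (X n ω) - G (Y n ω)| ≤ 2 * C := by
        linarith [abs_sub (G (X n ω)) (G (Y n ω)), hC (X n ω), hC (Y n ω)]
      have n1 : 0 ≤ Set.indicator {ω | r ≤ dist (X n ω) (Y n ω)} (fun _ => 2 * C) ω :=
        Set.indicator_nonneg (fun _ _ => by positivity) _
      have n2 : 0 ≤ Set.indicator (Y n ⁻¹' oscSet G ε r) (fun _ => 2 * C) ω :=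
        Set.indicator_nonneg (fun _ _ => by positivity) _
      by_cases h1 : ω ∈ {ω | r ≤ dist (X n ω) (Y n ω)}
      · rw [Set.indicator_of_mem h1]
        linarith
      by_cases h2 : ω ∈ Y n ⁻¹' oscSet G ε r
      · rw [Set.indicator_of_mem h2]
        linarith
      have h3 : |G (X n ω) - G (Y n ω)| ≤ ε :=
        not_lt.1 fun h => h2 ⟨X n ω, not_le.1 h1, h⟩
      linarith
    calc ∫ ω, |G (X n ω) - G (Y n ω)| ∂P
        ≤ ∫ ω, (ε + Set.indicator {ω | r ≤ dist (X n ω) (Y n ω)} (fun _ => 2 * C) ω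
          + Set.indicator (Y n ⁻¹' oscSet G ε r) (fun _ => 2 * C) ω) ∂P :=
          integral_mono_of_nonneg (ae_of_all _ fun _ => abs_nonneg _) (hi3.add hi2)
            (ae_of_all _ hpt)
      _ = _ := by
          rw [integral_add hi3 hi2, integral_add (integrable_const ε) hi1,
            integral_indicator_const _ hA, integral_indicator_const _ hB, hlaw 0 n,
            map_measureReal_apply (hY n) hO]
          simp [mul_comm]
  have := Measure.isProbabilityMeasure_map (μ := P) (hY 0).aemeasurable
  rw [Metric.tendsto_atTop']
  intro η hη
  have hη3 : 0 < η / 3 := by positivity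
  have hk := (tendsto_measureReal_oscSet (P.map (Y 0)) hGc hη3).const_mul (2 * C)
  rw [mul_zero] at hk
  obtain ⟨k, hk⟩ := (hk.eventually (gt_mem_nhds hη3)).exists
  have hn : Tendsto (fun n => 2 * C * P.real {ω | 1 / ((k : ℝ) + 1) ≤ dist (X n ω) (Y n ω)})
      atTop (nhds 0) := by
    have h := (ENNReal.tendsto_toReal ENNReal.zero_ne_top).comp
      (hprob (1 / ((k : ℝ) + 1)) (by positivity))
    simpa [Measure.real] using h.const_mul (2 * C)
  obtain ⟨N, hN⟩ := eventually_atTop.1 (hn.eventually (gt_mem_nhds hη3))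
  refine ⟨N, fun n hnN => ?_⟩
  rw [Real.dist_eq, sub_zero, abs_of_nonneg (integral_nonneg fun _ => abs_nonneg _)]
  linarith [key (η / 3) (1 / ((k : ℝ) + 1)) hη3 n, hN n hnN.le]
end
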